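/- arXiv:1711.04367 — 3 statements merged into one kernel-verified Lean document; each statement's English description precedes it below -/
import Mathlib

section
/- Let n, d be natural numbers with 1 ≤ d and 3d ≤ n. Then, as real numbers, C(n−2d, d) / C(n+1, d+1) ≥ ((d+1)/(n+1)) · ((n−3d+1)/(n−d+1))^d, where C(a,b) denotes the binomial coefficient a choose b. -/
/-!
Cancelling `k!` writes `C(m, k) / C(n, k)` as the product of the `k` ratios `(m - i) / (n - i)`,
`i < k`. For `m ≤ n` these decrease with `i`, because adding the same nonnegative amount to
numerator and denominator moves a ratio in `[0, 1]` up; so each is at least the last one,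
`(m - k + 1) / (n - k + 1)`. Absorption, `(k + 1) C(n + 1, k + 1) = (n + 1) C(n, k)`, supplies the
remaining factor, and the theorem is the case `m = n - 2d`, `k = d`.
-/

section

variable {K : Type*} [Field K]

-- If `m < k` or `n < k`, truncated subtraction and `x / 0 = 0` make both sides vanish.
theorem choose_div_choose_eq_prod_range [CharZero K] (m n k : ℕ) :
    (m.choose k : K) / n.choose k =
      ∏ i ∈ Finset.range k, ((m - i : ℕ) : K) / ((n - i : ℕ) : K) := by
  have hk : (k.factorial : K) ≠ 0 := by exact_mod_cast k.factorial_ne_zero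
  rw [← mul_div_mul_left _ _ hk]
  simp only [← Nat.cast_mul, ← Nat.descFactorial_eq_factorial_mul_choose,
    Nat.descFactorial_eq_prod_range, Nat.cast_prod, Finset.prod_div_distrib]

theorem cast_choose_add_one_add_one [CharZero K] (n k : ℕ) :
    ((n + 1).choose (k + 1) : K) = (n + 1) / (k + 1) * n.choose k := by
  rw [div_mul_eq_mul_div, eq_div_iff k.cast_add_one_ne_zero]
  exact_mod_cast (Nat.add_one_mul_choose_eq n k).symm

variable [LinearOrder K] [IsStrictOrderedRing K]

theorem div_le_add_div_add {a b c : K} (hb : 0 < b) (hc : 0 ≤ c) (hab : a ≤ b) :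
    a / b ≤ (a + c) / (b + c) := by
  rw [div_le_div_iff₀ hb (by positivity)]
  linear_combination c * hab

theorem pow_le_choose_div_choose {m n k : ℕ} (hkm : k ≤ m) (hmn : m ≤ n) :
    (((m : K) - k + 1) / ((n : K) - k + 1)) ^ k ≤ (m.choose k : K) / n.choose k := by
  have hkm' : (k : K) ≤ m := by exact_mod_cast hkm
  have hmn' : (m : K) ≤ n := by exact_mod_cast hmn
  have hn : 0 < (n : K) - k + 1 := by linarith
  have hfactor : ∀ i ∈ Finset.range k,
      ((m : K) - k + 1) / (n - k + 1) ≤ ((m - i : ℕ) : K) / ((n - i : ℕ) : K) := by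
    intro i hi
    have hik : i + 1 ≤ k := Finset.mem_range.mp hi
    have hik' : (i : K) + 1 ≤ k := by exact_mod_cast hik
    rw [Nat.cast_sub (by lia), Nat.cast_sub (by lia)]
    convert div_le_add_div_add (c := (k : K) - 1 - i) hn (by linarith)
      (by linarith : (m : K) - k + 1 ≤ n - k + 1) using 2 <;> ring
  calc (((m : K) - k + 1) / (n - k + 1)) ^ k
      = ∏ _i ∈ Finset.range k, ((m : K) - k + 1) / (n - k + 1) := by
        rw [Finset.prod_const, Finset.card_range]
    _ ≤ ∏ i ∈ Finset.range k, ((m - i : ℕ) : K) / ((n - i : ℕ) : K) :=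
        Finset.prod_le_prod (fun _ _ ↦ div_nonneg (by linarith) hn.le) hfactor
    _ = (m.choose k : K) / n.choose k := (choose_div_choose_eq_prod_range m n k).symm

theorem binomial_ratio_lower_bound_general {m n k : ℕ} (hkm : k ≤ m) (hmn : m ≤ n) :
    (m.choose k : K) / (n + 1).choose (k + 1) ≥
      ((k : K) + 1) / (n + 1) * (((m : K) - k + 1) / (n - k + 1)) ^ k :=
  calc (m.choose k : K) / (n + 1).choose (k + 1)
      = (k + 1) / (n + 1) * (m.choose k / n.choose k) := by
        rw [cast_choose_add_one_add_one, div_mul_eq_div_div_swap, div_div_eq_mul_div,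
          mul_div_assoc, mul_comm]
    _ ≥ (k + 1) / (n + 1) * (((m : K) - k + 1) / (n - k + 1)) ^ k := by
        gcongr
        exact pow_le_choose_div_choose hkm hmn

end

theorem binomial_ratio_lower_bound (n d : ℕ) (hd : 1 ≤ d) (hn : 3 * d ≤ n) :
    ((n - 2 * d).choose d : ℝ) / ((n + 1).choose (d + 1) : ℝ) ≥
      ((d : ℝ) + 1) / ((n : ℝ) + 1) *
        (((n : ℝ) - 3 * d + 1) / ((n : ℝ) - d + 1)) ^ d := by
  have hcast : ((n - 2 * d : ℕ) : ℝ) - d = n - 3 * d := by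
    push_cast [show 2 * d ≤ n by lia]
    ring
  rw [← hcast]
  exact binomial_ratio_lower_bound_general (by lia) (Nat.sub_le _ _)
end

section
/- Let n, d be natural numbers with d ≥ 8 and 4d² + d ≤ n + 1. Then 4 · C(n+1, d+1) ≤ n · C(n−2d, d), where C(a,b) denotes the binomial coefficient a choose b. -/
/-!
A `d`-subset of an `n`-set either avoids a fixed `c`-subset or contains one of its `c` points, so
`C(n, d) - C(n - c, d) ≤ c * C(n - 1, d - 1) = (c * d / n) * C(n, d)`. Once `2 * c * d ≤ n`, at
least half of the `d`-subsets therefore avoid the `c`-subset. The identity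
`(n + 1) * C(n, d) = (d + 1) * C(n + 1, d + 1)` then gains the remaining factor of order `d`.
-/

theorem choose_succ_le_choose_sub_add (n c d : ℕ) :
    n.choose (d + 1) ≤ (n - c).choose (d + 1) + c * (n - 1).choose d := by
  induction c with
  | zero => simp
  | succ c ih =>
    have remove_point : (n - c).choose (d + 1) ≤
        (n - (c + 1)).choose (d + 1) + (n - 1).choose d := by
      rcases Nat.eq_zero_or_pos (n - c) with h | h
      · simp [h]
      · obtain ⟨m, hm⟩ := Nat.exists_eq_add_one.mpr h
        rw [hm, Nat.choose_succ_succ', add_comm, show n - (c + 1) = m by omega]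
        gcongr
        omega
    linarith

theorem mul_choose_le_mul_choose_sub_add (n c d : ℕ) :
    n * n.choose d ≤ n * (n - c).choose d + c * d * n.choose d := by
  rcases n with - | n
  · simp
  rcases d with - | d
  · simp
  calc (n + 1) * (n + 1).choose (d + 1)
      ≤ (n + 1) * ((n + 1 - c).choose (d + 1) + c * n.choose d) := by
        gcongr
        exact choose_succ_le_choose_sub_add (n + 1) c d
    _ = (n + 1) * (n + 1 - c).choose (d + 1) + c * ((n + 1) * n.choose d) := by ring
    _ = (n + 1) * (n + 1 - c).choose (d + 1) + c * (d + 1) * (n + 1).choose (d + 1) := by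
        rw [Nat.add_one_mul_choose_eq]
        ring

theorem choose_le_two_mul_choose_sub {n c d : ℕ} (h : 2 * c * d ≤ n) :
    n.choose d ≤ 2 * (n - c).choose d := by
  rcases n.eq_zero_or_pos with rfl | hn
  · rw [Nat.zero_sub]
    omega
  have bound := mul_choose_le_mul_choose_sub_add n c d
  have half : 2 * c * d * n.choose d ≤ n * n.choose d := by gcongr
  refine Nat.le_of_mul_le_mul_left ?_ hn
  linarith

theorem choose_counting_bound_general {k c n d : ℕ} (hk : 2 * k ≤ d) (hn : 2 * c * d ≤ n) :
    k * (n + 1).choose (d + 1) ≤ n * (n - c).choose d := by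
  rcases lt_or_ge n d with hnd | hdn
  · simp [Nat.choose_eq_zero_of_lt (Nat.succ_lt_succ hnd)]
  refine Nat.le_of_mul_le_mul_right ?_ d.succ_pos
  calc k * (n + 1).choose (d + 1) * (d + 1)
      = k * ((n + 1) * n.choose d) := by rw [Nat.add_one_mul_choose_eq, mul_assoc]
    _ ≤ k * ((n + 1) * (2 * (n - c).choose d)) := by
        gcongr
        exact choose_le_two_mul_choose_sub hn
    _ = 2 * k * (n + 1) * (n - c).choose d := by ring
    _ ≤ d * (n + 1) * (n - c).choose d := by gcongr
    _ ≤ n * (d + 1) * (n - c).choose d := by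
        gcongr ?_ * _
        linarith
    _ = n * (n - c).choose d * (d + 1) := by ring

theorem choose_counting_bound (n d : ℕ) (hd : 8 ≤ d)
    (hn : 4 * d ^ 2 + d ≤ n + 1) :
    4 * (n + 1).choose (d + 1) ≤ n * (n - 2 * d).choose d :=
  choose_counting_bound_general hd (by linarith)
end

section
/- Let n, d be natural numbers and let x, x', y : Fin n → Bool. Suppose x ≠ x', each of x and x' takes the value true on exactly d indices, y agrees with x on every index in the union of the supports of x and x' (the set of indices where x or x' is true), and the Hamming distance between x and y is exactly d. Then the Hamming distance between x' and y is strictly greater than d. -/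
section HammingDist

variable {ι : Type*} {β : ι → Type*} [Fintype ι] [∀ i, DecidableEq (β i)]

theorem hammingDist_add_hammingDist_of_forall_eq_or_eq {x y z : ∀ i, β i}
    (h : ∀ i, x i = y i ∨ y i = z i) :
    hammingDist x y + hammingDist y z = hammingDist x z := by
  classical
  have differ_iff (i : ι) : x i ≠ y i ∨ y i ≠ z i ↔ x i ≠ z i := by grind
  have differ_disjoint :
      Disjoint ({i | x i ≠ y i} : Finset ι) ({i | y i ≠ z i} : Finset ι) :=
    Finset.disjoint_filter.mpr fun i _ hxy hyz ↦ (h i).elim hxy hyz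
  simp only [hammingDist, ← Finset.card_union_of_disjoint differ_disjoint, ← Finset.filter_or,
    differ_iff]

theorem hammingDist_gt_of_agree_on_supports_general {x x' y : ∀ i, β i} (hne : x ≠ x')
    (hagree : ∀ i, x i ≠ x' i → y i = x i) : hammingDist x y < hammingDist x' y := by
  have between (i : ι) : x' i = x i ∨ x i = y i :=
    (eq_or_ne (x' i) (x i)).imp_right fun hi ↦ (hagree i hi.symm).symm
  calc
    hammingDist x y < hammingDist x' x + hammingDist x y :=
      Nat.lt_add_of_pos_left (hammingDist_pos.mpr hne.symm)
    _ = hammingDist x' y := hammingDist_add_hammingDist_of_forall_eq_or_eq between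

end HammingDist

theorem hammingDist_gt_of_agree_on_supports (n d : ℕ) (x x' y : Fin n → Bool)
    (hxx' : x ≠ x')
    (hx : (Finset.univ.filter fun i => x i = true).card = d)
    (hx' : (Finset.univ.filter fun i => x' i = true).card = d)
    (hagree : ∀ i : Fin n, x i = true ∨ x' i = true → y i = x i)
    (hham : hammingDist x y = d) :
    d < hammingDist x' y :=
  hham ▸ hammingDist_gt_of_agree_on_supports_general hxx' fun i hi ↦ hagree i (by grind)
end
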